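/- For every α ∈ [0,1], the vector D^{2−α} C D^{α} 𝟙 satisfies componentwise D^{2−α} C D^{α} 𝟙 ≥ −α² 𝟙, i.e. for every i ∈ {1,…,N}, (D^{2−α} C D^{α} 𝟙)_i ≥ −α², where 𝟙 = (1,…,1)ᵀ ∈ ℝ^N. -/

import Mathlib

/-!
The off-diagonal entries of `C` are nonpositive, so a neighbour `x_0 = 0` or `x_{N+1} = 1` missing
from a row only helps. With `x = x_i` and `t = h / x` the claim thus reduces to
`(1 + t/2) (1 + t)^α + (1 - t/2) (1 - t)^α ≤ 2 + α² t²` for `t ∈ [0, 1]`. Here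
`(1 + t/2) (1 + t)^α` is the mean of `(1 + t)^(α+1)` and `(1 + t)^α`, so by the binomial series the
left side is `∑ (choose (α+1) n + choose α n) t^n` over even `n`. The terms with `n = 0, 2` add up
to `2 + α² t²`; all later coefficients are nonpositive, since
`(n + 1) (choose (α+1) (n+1) + choose α (n+1)) = (2 α + 1 - n) choose α n`
and `choose α n ≥ 0` for odd `n` and `α ∈ [0, 1]`.
-/

open Real Matrix

noncomputable section

/-- Mesh size `h = 1/(N+1)`. -/
def hmesh (N : ℕ) : ℝ := 1 / (N + 1)

/-- Grid points `x_i = i·h`, `i = 1,…,N` (here `i : Fin N` corresponds to `i+1`). -/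
def gridx (N : ℕ) (i : Fin N) : ℝ := ((i : ℕ) + 1) * hmesh N

/-- `A = (1/h²)·tridiag(−1,2,−1)`. -/
def matA (N : ℕ) : Matrix (Fin N) (Fin N) ℝ := fun i j =>
  (1 / (hmesh N) ^ 2) *
    (if (i : ℕ) = (j : ℕ) then 2
     else if (i : ℕ) + 1 = (j : ℕ) ∨ (j : ℕ) + 1 = (i : ℕ) then -1 else 0)

/-- `B = (1/(2h))·tridiag(−1,0,1)`. -/
def matB (N : ℕ) : Matrix (Fin N) (Fin N) ℝ := fun i j =>
  (1 / (2 * hmesh N)) *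
    (if (i : ℕ) + 1 = (j : ℕ) then 1
     else if (j : ℕ) + 1 = (i : ℕ) then -1 else 0)

/-- `D = diag(x_1,…,x_N)`. -/
def matD (N : ℕ) : Matrix (Fin N) (Fin N) ℝ := Matrix.diagonal (gridx N)

/-- `D^β = diag(x_1^β,…,x_N^β)` (real powers). -/
def matDpow (N : ℕ) (β : ℝ) : Matrix (Fin N) (Fin N) ℝ :=
  Matrix.diagonal (fun i => gridx N i ^ β)

/-- `C = A − D⁻¹B`. -/
def matC (N : ℕ) : Matrix (Fin N) (Fin N) ℝ :=
  matA N - Matrix.diagonal (fun i => (gridx N i)⁻¹) * matB N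

/-- `g(y) = sin(2y)/(2y)` for `y ≠ 0`, `g(0) = 1`. -/
def gfun (y : ℝ) : ℝ := if y = 0 then 1 else Real.sin (2 * y) / (2 * y)

/-- `G(u) = diag(g(u_1),…,g(u_N))`. -/
def matG {N : ℕ} (u : Fin N → ℝ) : Matrix (Fin N) (Fin N) ℝ :=
  Matrix.diagonal (fun i => gfun (u i))

/-- The matrix `I + Δt(C + G(v)D⁻²)` of the semi-implicit Euler scheme. -/
def stepMat (N : ℕ) (Δt : ℝ) (v : Fin N → ℝ) : Matrix (Fin N) (Fin N) ℝ :=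
  1 + Δt • (matC N + matG v * matDpow N (-2))

/-- Operator norm of a matrix induced by the maximum norm on `ℝ^N`
(the Pi norm on `Fin N → ℝ` is the sup norm). -/
def opNormInf {N : ℕ} (M : Matrix (Fin N) (Fin N) ℝ) : ℝ :=
  ‖(LinearMap.toContinuousLinearMap (Matrix.mulVecLin M) :
      (Fin N → ℝ) →L[ℝ] (Fin N → ℝ))‖

end

lemma sum_ite_eq_le_of_injective {ι β M : Type*} [Fintype ι] [DecidableEq β] [AddCommMonoid M]
    [Preorder M] {e : ι → β} (he : e.Injective) (f : β → M) {b : β} (hb : 0 ≤ f b) :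
    ∑ j, (if e j = b then f (e j) else 0) ≤ f b := by
  classical
  by_cases h : ∃ k, e k = b
  · obtain ⟨k, rfl⟩ := h
    simp [he.eq_iff]
  · simpa [not_exists.1 h] using hb

section RingChoose

variable {R : Type*} [CommRing R] [BinomialRing R]

lemma succ_mul_ringChoose_succ (r : R) (n : ℕ) :
    (n + 1) * Ring.choose r (n + 1) = (r - n) * Ring.choose r n := by
  have h := Ring.choose_smul_choose r n.le_succ
  simpa [Nat.choose_succ_self_right, mul_comm] using h

lemma succ_mul_ringChoose_add_one_add_ringChoose (r : R) (n : ℕ) :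
    (n + 1) * (Ring.choose (r + 1) (n + 1) + Ring.choose r (n + 1)) =
      (2 * r + 1 - n) * Ring.choose r n := by
  rw [Ring.choose_succ_succ]
  linear_combination 2 * succ_mul_ringChoose_succ r n

variable [LinearOrder R] [IsStrictOrderedRing R] {r : R}

lemma neg_one_pow_mul_ringChoose_succ_nonneg (h0 : 0 ≤ r) (h1 : r ≤ 1) (n : ℕ) :
    0 ≤ (-1) ^ n * Ring.choose r (n + 1) := by
  induction n with
  | zero => simpa using h0
  | succ n ih =>
    have hrec : ((n + 1 : ℕ) + 1 : R) * ((-1) ^ (n + 1) * Ring.choose r (n + 1 + 1)) =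
        (n + 1 - r) * ((-1) ^ n * Ring.choose r (n + 1)) := by
      have h := succ_mul_ringChoose_succ r (n + 1)
      push_cast at h ⊢
      linear_combination (-1) ^ (n + 1) * h
    have hfac : 0 ≤ (n + 1 - r : R) := by linarith [n.cast_nonneg (α := R)]
    exact nonneg_of_mul_nonneg_right (hrec ▸ mul_nonneg hfac ih) (by positivity)

lemma ringChoose_nonneg_of_odd (h0 : 0 ≤ r) (h1 : r ≤ 1) {n : ℕ} (hn : Odd n) :
    0 ≤ Ring.choose r n := by
  obtain ⟨m, rfl⟩ := hn
  simpa using neg_one_pow_mul_ringChoose_succ_nonneg h0 h1 (2 * m)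

lemma ringChoose_add_one_add_ringChoose_nonpos (h0 : 0 ≤ r) (h1 : r ≤ 1) {n : ℕ}
    (hn : Even n) (hn3 : 3 ≤ n) : Ring.choose (r + 1) n + Ring.choose r n ≤ 0 := by
  obtain ⟨m, rfl⟩ : ∃ m, n = m + 1 := ⟨n - 1, by lia⟩
  have hm : (3 : R) ≤ m := by exact_mod_cast (by grind : 3 ≤ m)
  have hodd : Odd m := by grind
  have h : (m + 1 : R) * (Ring.choose (r + 1) (m + 1) + Ring.choose r (m + 1)) ≤ 0 := by
    rw [succ_mul_ringChoose_add_one_add_ringChoose]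
    exact mul_nonpos_of_nonpos_of_nonneg (by linarith) (ringChoose_nonneg_of_odd h0 h1 hodd)
  exact nonpos_of_mul_nonpos_right h (by positivity)

end RingChoose

section BinomialSeries

lemma hasSum_ringChoose_mul_pow (a : ℝ) {t : ℝ} (ht : |t| < 1) :
    HasSum (fun n ↦ Ring.choose a n * t ^ n) ((1 + t) ^ a) := by
  have h := Real.one_add_rpow_hasFPowerSeriesOnBall_zero (a := a).hasSum
    (y := t) (by simpa [enorm_eq_nnnorm, ← NNReal.coe_lt_one] using ht)
  simpa [binomialSeries, FormalMultilinearSeries.coeff_ofScalars, mul_comm] using h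

lemma hasSum_one_add_half_mul_rpow (a : ℝ) {t : ℝ} (ht : |t| < 1) :
    HasSum (fun n ↦ (Ring.choose (a + 1) n + Ring.choose a n) / 2 * t ^ n)
      ((1 + t / 2) * (1 + t) ^ a) := by
  have hsum := ((hasSum_ringChoose_mul_pow (a + 1) ht).add
    (hasSum_ringChoose_mul_pow a ht)).div_const 2
  have hval : ((1 + t) ^ (a + 1) + (1 + t) ^ a) / 2 = (1 + t / 2) * (1 + t) ^ a := by
    rw [Real.rpow_add_one (by linarith [neg_lt_of_abs_lt ht])]
    ring
  rw [hval] at hsum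
  exact hsum.congr_fun fun n ↦ by ring

variable {α t : ℝ}

lemma stencil_rpow_le_of_abs_lt_one (h0 : 0 ≤ α) (h1 : α ≤ 1) (ht : |t| < 1) :
    (1 + t / 2) * (1 + t) ^ α + (1 - t / 2) * (1 - t) ^ α ≤ 2 + α ^ 2 * t ^ 2 := by
  set c : ℕ → ℝ := fun n ↦ (Ring.choose (α + 1) n + Ring.choose α n) / 2
  have hsum : HasSum (fun n ↦ c n * t ^ n + c n * (-t) ^ n)
      ((1 + t / 2) * (1 + t) ^ α + (1 - t / 2) * (1 - t) ^ α) := by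
    have hneg := hasSum_one_add_half_mul_rpow α (t := -t) (by rwa [abs_neg])
    rw [neg_div, ← sub_eq_add_neg, ← sub_eq_add_neg] at hneg
    exact (hasSum_one_add_half_mul_rpow α ht).add hneg
  have htail : ∀ n ∉ Finset.range 3, c n * t ^ n + c n * (-t) ^ n ≤ 0 := by
    intro n hn
    rcases n.even_or_odd with heven | hodd
    · have hc : c n ≤ 0 := div_nonpos_of_nonpos_of_nonneg
        (ringChoose_add_one_add_ringChoose_nonpos h0 h1 heven (by simpa using hn)) zero_le_two
      rw [heven.neg_pow, ← two_mul]
      linarith [mul_nonpos_of_nonpos_of_nonneg hc (heven.pow_nonneg t)]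
    · simp [hodd.neg_pow]
  have hc0 : c 0 = 1 := by simp [c]
  have hc2 : c 2 = α ^ 2 / 2 := by
    have h := succ_mul_ringChoose_add_one_add_ringChoose α 1
    rw [Nat.cast_one, Ring.choose_one_right] at h
    simp only [c]
    linarith
  calc (1 + t / 2) * (1 + t) ^ α + (1 - t / 2) * (1 - t) ^ α
      ≤ ∑ n ∈ Finset.range 3, (c n * t ^ n + c n * (-t) ^ n) := by
        have h := sum_le_hasSum _ (fun n hn ↦ neg_nonneg.2 (htail n hn)) hsum.neg
        rwa [Finset.sum_neg_distrib, neg_le_neg_iff] at h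
    _ = 2 + α ^ 2 * t ^ 2 := by
        simp only [Finset.sum_range_succ, Finset.sum_range_zero, hc0, hc2]
        ring

lemma stencil_rpow_le (h0 : 0 ≤ α) (h1 : α ≤ 1) (ht : |t| ≤ 1) :
    (1 + t / 2) * (1 + t) ^ α + (1 - t / 2) * (1 - t) ^ α ≤ 2 + α ^ 2 * t ^ 2 := by
  have hclosed : IsClosed
      {s : ℝ | (1 + s / 2) * (1 + s) ^ α + (1 - s / 2) * (1 - s) ^ α ≤ 2 + α ^ 2 * s ^ 2} :=
    isClosed_le (by fun_prop (disch := simp [h0])) (by fun_prop)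
  have hmem : t ∈ closure (Set.Ioo (-1) 1) := by
    rw [closure_Ioo (by norm_num)]
    exact abs_le.1 ht
  exact closure_minimal (fun s hs ↦ stencil_rpow_le_of_abs_lt_one h0 h1 (abs_lt.2 hs)) hclosed hmem

end BinomialSeries

section RadialDiff

/-- The central difference approximation with step `h` of `-f'' - f' / x`, the operator discretized
by `C`. -/
noncomputable def radialDiff (h : ℝ) (f : ℝ → ℝ) (x : ℝ) : ℝ :=
  (2 * f x - f (x + h) - f (x - h)) / h ^ 2 - x⁻¹ * ((f (x + h) - f (x - h)) / (2 * h))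

lemma radialDiff_eq {h : ℝ} (hh : h ≠ 0) (f : ℝ → ℝ) (x : ℝ) :
    radialDiff h f x =
      (2 * f x - (1 + h / x / 2) * f (x + h) - (1 - h / x / 2) * f (x - h)) / h ^ 2 := by
  unfold radialDiff
  field

lemma neg_sq_le_rpow_mul_radialDiff_rpow {α h x : ℝ} (h0 : 0 ≤ α) (h1 : α ≤ 1) (hh : 0 < h)
    (hhx : h ≤ x) : -(α ^ 2) ≤ x ^ (2 - α) * radialDiff h (· ^ α) x := by
  have hx : 0 < x := hh.trans_le hhx
  set t := h / x with ht
  have ht0 : 0 < t := div_pos hh hx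
  have ht1 : t ≤ 1 := (div_le_one hx).2 hhx
  have hadd : (x + h) ^ α = x ^ α * (1 + t) ^ α := by
    rw [← Real.mul_rpow hx.le (by linarith), ht]
    field_simp
  have hsub : (x - h) ^ α = x ^ α * (1 - t) ^ α := by
    rw [← Real.mul_rpow hx.le (by linarith), ht]
    field_simp
  have hpow : x ^ (2 - α) * x ^ α = x ^ 2 := by
    rw [← Real.rpow_add hx, sub_add_cancel, Real.rpow_two]
  have hstencil := stencil_rpow_le h0 h1 (abs_le.2 ⟨by linarith, ht1⟩)
  calc -(α ^ 2) = -(α ^ 2 * t ^ 2) / t ^ 2 := by field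
    _ ≤ (2 - ((1 + t / 2) * (1 + t) ^ α + (1 - t / 2) * (1 - t) ^ α)) / t ^ 2 := by
      gcongr
      linarith
    _ = x ^ (2 - α) * x ^ α * (2 - ((1 + t / 2) * (1 + t) ^ α + (1 - t / 2) * (1 - t) ^ α))
          / h ^ 2 := by
      rw [hpow, show h = t * x by rw [ht]; field]
      field
    _ = x ^ (2 - α) * radialDiff h (· ^ α) x := by
      rw [radialDiff_eq hh.ne', hadd, hsub]
      ring

end RadialDiff

section Grid

variable {N : ℕ}

lemma hmesh_pos (N : ℕ) : 0 < hmesh N := by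
  unfold hmesh
  positivity

lemma hmesh_le_gridx (i : Fin N) : hmesh N ≤ gridx N i :=
  le_mul_of_one_le_left (hmesh_pos N).le (by simp)

lemma gridx_injective (N : ℕ) : Function.Injective (gridx N) := fun i j hij ↦ by
  simpa [gridx, (hmesh_pos N).ne', Fin.val_inj] using hij

lemma gridx_eq_gridx_add_hmesh_iff {i j : Fin N} :
    gridx N j = gridx N i + hmesh N ↔ (i : ℕ) + 1 = j := by
  rw [gridx, gridx, ← add_one_mul, mul_left_inj' (hmesh_pos N).ne', add_left_inj, eq_comm]
  norm_cast

lemma gridx_eq_gridx_sub_hmesh_iff {i j : Fin N} :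
    gridx N j = gridx N i - hmesh N ↔ (j : ℕ) + 1 = i := by
  rw [eq_sub_iff_add_eq, eq_comm, gridx_eq_gridx_add_hmesh_iff]

lemma matC_apply (i j : Fin N) :
    matC N i j = (if i = j then 2 / hmesh N ^ 2 else 0)
      - (if gridx N j = gridx N i + hmesh N
          then (1 + hmesh N / gridx N i / 2) / hmesh N ^ 2 else 0)
      - (if gridx N j = gridx N i - hmesh N
          then (1 - hmesh N / gridx N i / 2) / hmesh N ^ 2 else 0) := by
  have hh : hmesh N ≠ 0 := (hmesh_pos N).ne'
  simp only [matC, matA, matB, Matrix.sub_apply, Matrix.diagonal_mul,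
    gridx_eq_gridx_add_hmesh_iff, gridx_eq_gridx_sub_hmesh_iff, Fin.ext_iff]
  split_ifs <;> first | lia | field

lemma radialDiff_le_matC_mulVec {f : ℝ → ℝ} {i : Fin N} (hadd : 0 ≤ f (gridx N i + hmesh N))
    (hsub : 0 ≤ f (gridx N i - hmesh N)) :
    radialDiff (hmesh N) f (gridx N i) ≤ (matC N *ᵥ (f ∘ gridx N)) i := by
  have hh := hmesh_pos N
  have hx : 0 < gridx N i := hh.trans_le (hmesh_le_gridx i)
  have ht : hmesh N / gridx N i ≤ 1 := (div_le_one hx).2 (hmesh_le_gridx i)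
  set p := (1 + hmesh N / gridx N i / 2) / hmesh N ^ 2 with hp
  set q := (1 - hmesh N / gridx N i / 2) / hmesh N ^ 2 with hq
  have hp0 : 0 ≤ p := by positivity
  have hq0 : 0 ≤ q := div_nonneg (by linarith) (by positivity)
  have hright := sum_ite_eq_le_of_injective (gridx_injective N) (fun y ↦ p * f y)
    (mul_nonneg hp0 hadd)
  have hleft := sum_ite_eq_le_of_injective (gridx_injective N) (fun y ↦ q * f y)
    (mul_nonneg hq0 hsub)
  calc radialDiff (hmesh N) f (gridx N i)
      = 2 / hmesh N ^ 2 * f (gridx N i) - p * f (gridx N i + hmesh N)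
          - q * f (gridx N i - hmesh N) := by
        rw [radialDiff_eq hh.ne']
        ring
    _ ≤ 2 / hmesh N ^ 2 * f (gridx N i)
          - ∑ j, (if gridx N j = gridx N i + hmesh N then p * f (gridx N j) else 0)
          - ∑ j, (if gridx N j = gridx N i - hmesh N then q * f (gridx N j) else 0) := by
        gcongr
    _ = (matC N *ᵥ (f ∘ gridx N)) i := by
        simp [Matrix.mulVec, dotProduct, matC_apply, ← hp, ← hq, sub_mul, ite_mul]

lemma matDpow_mulVec (β : ℝ) (v : Fin N → ℝ) (i : Fin N) :
    (matDpow N β *ᵥ v) i = gridx N i ^ β * v i :=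
  Matrix.mulVec_diagonal _ _ _

end Grid

/-- Componentwise estimate `D^{2−α} C D^{α} 𝟙 ≥ −α² 𝟙` for all `α ∈ [0,1]`. -/
theorem stmt3 {N : ℕ} (hN : 1 ≤ N) (α : ℝ) (hα : α ∈ Set.Icc (0 : ℝ) 1) :
    ∀ i : Fin N,
      -(α ^ 2) ≤ (matDpow N (2 - α) * matC N * matDpow N α).mulVec (fun _ => 1) i := by
  intro i
  have hh := hmesh_pos N
  have hhx := hmesh_le_gridx i
  have hone : matDpow N α *ᵥ (fun _ ↦ 1) = (· ^ α) ∘ gridx N := by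
    ext j
    simp [matDpow_mulVec]
  calc -(α ^ 2) ≤ gridx N i ^ (2 - α) * radialDiff (hmesh N) (· ^ α) (gridx N i) :=
        neg_sq_le_rpow_mul_radialDiff_rpow hα.1 hα.2 hh hhx
    _ ≤ gridx N i ^ (2 - α) * (matC N *ᵥ ((· ^ α) ∘ gridx N)) i := by
        gcongr
        · exact Real.rpow_nonneg (hh.le.trans hhx) _
        · exact radialDiff_le_matC_mulVec (Real.rpow_nonneg (by linarith) _)
            (Real.rpow_nonneg (by linarith) _)
    _ = (matDpow N (2 - α) * matC N * matDpow N α).mulVec (fun _ => 1) i := by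
        rw [← Matrix.mulVec_mulVec, ← Matrix.mulVec_mulVec, hone, matDpow_mulVec]
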